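/- Funnel implies robustness bounds. Let h : ℝ^p → ℝ, let y : [0,∞) → ℝ^p, let 0 ≤ a ≤ b, let r, ρ^max ∈ ℝ, let γ : [0,∞) → (0,∞), and let t* ≥ 0. Assume the funnel inequality −γ(t) + ρ^max < h(y(t)) < ρ^max holds for all t ≥ 0 and that −γ(t) + ρ^max ≥ r for all t ≥ t*. Then: (i) if t* = a, then r ≤ inf_{t∈[a,b]} h(y(t)) ≤ ρ^max (always-type robustness bound); (ii) if t* ∈ [a,b], then r ≤ sup_{t∈[a,b]} h(y(t)) ≤ ρ^max (eventually-type robustness bound). -/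

import Mathlib

/-!
The lower funnel boundary lifts the signal above `r` from time `tstar` on. The infimum needs this
lower bound throughout the window, hence `tstar ≤ a`; for the supremum the single time `tstar`
suffices.
-/

open Set

theorem csSup_mem_Icc_of_mem_of_le {α : Type*} [ConditionallyCompleteLattice α] {s : Set α}
    {l u x : α} (hx : x ∈ s) (hlx : l ≤ x) (hu : u ∈ upperBounds s) : sSup s ∈ Icc l u :=
  ⟨le_csSup_of_le ⟨u, hu⟩ hx hlx, csSup_le ⟨x, hx⟩ hu⟩

theorem csInf_mem_Icc_of_mem_of_le {α : Type*} [ConditionallyCompleteLattice α] {s : Set α}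
    {l u x : α} (hx : x ∈ s) (hxu : x ≤ u) (hl : l ∈ lowerBounds s) : sInf s ∈ Icc l u :=
  ⟨le_csInf ⟨x, hx⟩ hl, csInf_le_of_le ⟨l, hl⟩ hx hxu⟩

theorem funnel_implies_robustness_general {T α : Type*} [Preorder T]
    [ConditionallyCompleteLattice α] {f lower : T → α} {a b tstar : T} {r ρmax : α} (hab : a ≤ b)
    (hfunnel : ∀ t ∈ Icc a b, f t ∈ Icc (lower t) ρmax)
    (hlow : ∀ t ∈ Icc a b, tstar ≤ t → r ≤ lower t) :
    (tstar ≤ a → sInf (f '' Icc a b) ∈ Icc r ρmax) ∧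
    (tstar ∈ Icc a b → sSup (f '' Icc a b) ∈ Icc r ρmax) := by
  have le_signal (t : T) (ht : t ∈ Icc a b) (htstar : tstar ≤ t) : r ≤ f t :=
    (hlow t ht htstar).trans (hfunnel t ht).1
  constructor
  · intro htstar
    have ha : a ∈ Icc a b := left_mem_Icc.2 hab
    exact csInf_mem_Icc_of_mem_of_le (mem_image_of_mem f ha) (hfunnel a ha).2
      (forall_mem_image.2 fun t ht => le_signal t ht (htstar.trans ht.1))
  · intro htstar
    exact csSup_mem_Icc_of_mem_of_le (mem_image_of_mem f htstar) (le_signal tstar htstar le_rfl)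
      (forall_mem_image.2 fun t ht => (hfunnel t ht).2)

/-- funnel implies robustness bounds: if the funnel inequality
`−γ(t) + ρ^max < h(y(t)) < ρ^max` holds for all `t ≥ 0` and `−γ(t) + ρ^max ≥ r` for all
`t ≥ t*`, then: (i) if `t* = a`, the always-type robustness
`inf_{t∈[a,b]} h(y(t))` satisfies `r ≤ inf ≤ ρ^max`; (ii) if `t* ∈ [a,b]`, the
eventually-type robustness `sup_{t∈[a,b]} h(y(t))` satisfies `r ≤ sup ≤ ρ^max`. -/
theorem funnel_implies_robustness (p : ℕ) (h : (Fin p → ℝ) → ℝ) (y : ℝ → Fin p → ℝ)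
    (a b r ρmax tstar : ℝ) (γ : ℝ → ℝ)
    (ha : 0 ≤ a) (hab : a ≤ b) (htstar : 0 ≤ tstar)
    (hγpos : ∀ t ≥ (0 : ℝ), 0 < γ t)
    (hfunnel : ∀ t ≥ (0 : ℝ), -γ t + ρmax < h (y t) ∧ h (y t) < ρmax)
    (hlow : ∀ t ≥ tstar, r ≤ -γ t + ρmax) :
    (tstar = a →
      r ≤ sInf ((fun t => h (y t)) '' Set.Icc a b) ∧
      sInf ((fun t => h (y t)) '' Set.Icc a b) ≤ ρmax) ∧
    (tstar ∈ Set.Icc a b →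
      r ≤ sSup ((fun t => h (y t)) '' Set.Icc a b) ∧
      sSup ((fun t => h (y t)) '' Set.Icc a b) ≤ ρmax) := by
  have bounds := funnel_implies_robustness_general (f := fun t => h (y t)) hab
    (fun t ht => (hfunnel t (ha.trans ht.1)).imp le_of_lt le_of_lt) (fun t _ => hlow t)
  exact ⟨fun htstar_eq => bounds.1 htstar_eq.le, bounds.2⟩
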